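/- Let (R₁, Ad_{Γ₁}) and (R₂, Ad_{Γ₂}) be graded von Neumann algebras. If the von Neumann tensor product R₁ ⊗̄ (R₂)^(0) is of type III, then the graded tensor product R₁ ⊗̂ R₂ is of type III. -/

import Mathlib

noncomputable section

variable {H : Type*} [NormedAddCommGroup H] [InnerProductSpace ℂ H] [CompleteSpace H]

/-- A self-adjoint unitary operator. -/
def IsSAU (Γ : H →L[ℂ] H) : Prop := star Γ = Γ ∧ Γ * Γ = 1

/-- The even part of a graded set of operators. -/
def evenPart (R : Set (H →L[ℂ] H)) (Γ : H →L[ℂ] H) : Set (H →L[ℂ] H) :=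
  {x | x ∈ R ∧ Γ * x * Γ = x}

/-- The odd part of a graded set of operators. -/
def oddPart (R : Set (H →L[ℂ] H)) (Γ : H →L[ℂ] H) : Set (H →L[ℂ] H) :=
  {x | x ∈ R ∧ Γ * x * Γ = -x}

/-- The center of a set of operators. -/
def centerSet (R : Set (H →L[ℂ] H)) : Set (H →L[ℂ] H) :=
  {x | x ∈ R ∧ ∀ y ∈ R, x * y = y * x}

/-- An (orthogonal) projection operator. -/
def IsProjOp (e : H →L[ℂ] H) : Prop := e * e = e ∧ star e = e

/-- `e` is a subprojection of `f`. -/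
def SubProj (e f : H →L[ℂ] H) : Prop := e * f = e ∧ f * e = e

/-- Murray–von Neumann equivalence of projections relative to `M`. -/
def MvNEquiv (M : Set (H →L[ℂ] H)) (e f : H →L[ℂ] H) : Prop :=
  ∃ v ∈ M, star v * v = e ∧ v * star v = f

/-- `e` is finite relative to `M`. -/
def FiniteProj (M : Set (H →L[ℂ] H)) (e : H →L[ℂ] H) : Prop :=
  ∀ f ∈ M, IsProjOp f → SubProj f e → MvNEquiv M f e → f = e

/-- `e` is an abelian projection relative to `M`: the corner `eMe` is commutative. -/
def AbelianProj (M : Set (H →L[ℂ] H)) (e : H →L[ℂ] H) : Prop :=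
  ∀ x ∈ M, ∀ y ∈ M, (e * x * e) * (e * y * e) = (e * y * e) * (e * x * e)

/-- A von Neumann algebra (given as a set) is of type III: no nonzero finite projections. -/
def TypeIII (M : Set (H →L[ℂ] H)) : Prop :=
  ∀ e ∈ M, IsProjOp e → FiniteProj M e → e = 0

/-- Type II₁ : finite with no nonzero abelian projections. -/
def TypeII1 (M : Set (H →L[ℂ] H)) : Prop :=
  FiniteProj M 1 ∧ ∀ e ∈ M, IsProjOp e → AbelianProj M e → e = 0

/-- Type I_n : the identity is the sum of `n` orthogonal, mutually equivalent
abelian projections. -/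
def TypeI (M : Set (H →L[ℂ] H)) (n : Cardinal) : Prop :=
  ∃ (ι : Type) (E : ι → H →L[ℂ] H), Cardinal.mk ι = n ∧
    (∀ a, E a ∈ M ∧ IsProjOp (E a) ∧ AbelianProj M (E a)) ∧
    (Pairwise fun a b => E a * E b = 0) ∧
    (∀ a b, MvNEquiv M (E a) (E b)) ∧
    (∀ v : H, HasSum (fun a => (E a) v) v)

/-- The scalar operators. -/
def scalarOps (H : Type*) [NormedAddCommGroup H] [InnerProductSpace ℂ H] [CompleteSpace H] :
    Set (H →L[ℂ] H) := Set.range fun c : ℂ => c • (1 : H →L[ℂ] H)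

/-- `M` is a factor. -/
def IsFactor (M : Set (H →L[ℂ] H)) : Prop := centerSet M = scalarOps H

/-- `R` is graded by the self-adjoint unitary `Γ`. -/
def GradedBy (R : Set (H →L[ℂ] H)) (Γ : H →L[ℂ] H) : Prop :=
  IsSAU Γ ∧ ∀ x ∈ R, Γ * x * Γ ∈ R

/-- The von Neumann algebra generated by a (star-closed, unital) set:
its double commutant. -/
def genVN (S : Set (H →L[ℂ] H)) : Set (H →L[ℂ] H) :=
  Set.centralizer (Set.centralizer S)

/-- `c` is the central support of `T` in `M`. -/
def IsCentralSupport (M : Set (H →L[ℂ] H)) (T c : H →L[ℂ] H) : Prop :=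
  c ∈ centerSet M ∧ IsProjOp c ∧ c * T = T ∧
    ∀ d ∈ centerSet M, IsProjOp d → d * T = T → c * d = c

section Tensor

variable {H₁ H₂ K : Type*}
  [NormedAddCommGroup H₁] [InnerProductSpace ℂ H₁] [CompleteSpace H₁]
  [NormedAddCommGroup H₂] [InnerProductSpace ℂ H₂] [CompleteSpace H₂]
  [NormedAddCommGroup K] [InnerProductSpace ℂ K] [CompleteSpace K]

/-- `T` realizes the (spatial) tensor product of operators: it is bilinear,
multiplicative, star-preserving and unital, modelling `A ⊗ B` on `H₁ ⊗ H₂ = K`. -/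
def IsTensorMap (T : (H₁ →L[ℂ] H₁) → (H₂ →L[ℂ] H₂) → (K →L[ℂ] K)) : Prop :=
  T 1 1 = 1 ∧
  (∀ A B C D, T A B * T C D = T (A * C) (B * D)) ∧
  (∀ A B, star (T A B) = T (star A) (star B)) ∧
  (∀ A A' B, T (A + A') B = T A B + T A' B) ∧
  (∀ A B B', T A (B + B') = T A B + T A B') ∧
  (∀ (c : ℂ) A B, T (c • A) B = c • T A B) ∧
  (∀ (c : ℂ) A B, T A (c • B) = c • T A B)

/-- The graded tensor product `R₁ ⊗̂ R₂`: the von Neumann algebra generated by the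
operators `A Γ₁^(∂B) ⊗ B` for homogeneous `B`. -/
def gradedTP (T : (H₁ →L[ℂ] H₁) → (H₂ →L[ℂ] H₂) → (K →L[ℂ] K))
    (R₁ : Set (H₁ →L[ℂ] H₁)) (Γ₁ : H₁ →L[ℂ] H₁)
    (R₂ : Set (H₂ →L[ℂ] H₂)) (Γ₂ : H₂ →L[ℂ] H₂) : Set (K →L[ℂ] K) :=
  genVN ({x | ∃ A ∈ R₁, ∃ B ∈ evenPart R₂ Γ₂, x = T A B} ∪
         {x | ∃ A ∈ R₁, ∃ B ∈ oddPart R₂ Γ₂, x = T (A * Γ₁) B})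

/-- The ordinary von Neumann tensor product `R₁ ⊗̄ R₂`: generated by simple tensors. -/
def normalTP (T : (H₁ →L[ℂ] H₁) → (H₂ →L[ℂ] H₂) → (K →L[ℂ] K))
    (R₁ : Set (H₁ →L[ℂ] H₁)) (R₂ : Set (H₂ →L[ℂ] H₂)) : Set (K →L[ℂ] K) :=
  genVN {x | ∃ A ∈ R₁, ∃ B ∈ R₂, x = T A B}

end Tensor

/-!
Write `M` for the graded tensor product and `G = 1 ⊗ Γ₂`. The even part of `M` under `Ad G` is
`R₁ ⊗̄ (R₂)⁰`: by the density theorem every `x ∈ M` is a pointwise limit of combinations of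
homogeneous generators, and the even average `(x + G x G) / 2` only retains the even ones. So it
suffices that a graded von Neumann algebra `M` is of type III when its even part is.

Let `E` be a finite projection in `M`. If `z ∈ M` satisfies `z E = z` and `z z*` is even, then a
spectral cutoff of `z z*` produces an even projection equivalent to a subprojection of `E`, hence
finite, so `z = 0`. Now let `s = E s E` with `G s ∈ M`. For self-adjoint `s` the elements
`z = |s| ± G s` are of this kind, since the odd parts of `z z*` cancel, and so `s = 0`. In general
this applies to `s + s*`, so `s`, and likewise `i s`, is skew-adjoint, and again `s = 0`. Taking
`s = E (G m) E` shows that `G E G` and `E` are centrally orthogonal, so `E + G E G` is a finite even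
projection and vanishes.
-/

namespace IsProjOp

variable {e p q v : H →L[ℂ] H}

lemma mul_eq_self_of_mul_star (hq : IsProjOp q) (hv : v * star v = q) : q * v = v := by
  have h : (q * v - v) * star (q * v - v) = 0 := by
    calc (q * v - v) * star (q * v - v)
        = q * (v * star v) * star q - q * (v * star v) - v * star v * star q + v * star v := by
          simp only [star_sub, star_mul]; noncomm_ring
      _ = 0 := by simp only [hv, hq.1, hq.2]; noncomm_ring
  exact sub_eq_zero.1 ((CStarRing.mul_star_self_eq_zero_iff _).1 h)

lemma star_mul_self_of_mul_star (hq : IsProjOp q) (hv : v * star v = q) :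
    IsProjOp (star v * v) := by
  refine ⟨?_, by rw [star_mul, star_star]⟩
  calc star v * v * (star v * v) = star v * (v * star v * v) := by noncomm_ring
    _ = star v * v := by rw [hv, hq.mul_eq_self_of_mul_star hv]

lemma mul_eq_zero_comm (he : IsProjOp e) (hp : IsProjOp p) (h : p * e = 0) : e * p = 0 := by
  simpa [he.2, hp.2] using congrArg star h

lemma add (he : IsProjOp e) (hp : IsProjOp p) (h : p * e = 0) : IsProjOp (e + p) :=
  ⟨by simp [mul_add, add_mul, he.1, hp.1, h, he.mul_eq_zero_comm hp h],
    by rw [star_add, he.2, hp.2]⟩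

end IsProjOp

namespace IsSAU

variable {G e x : H →L[ℂ] H}

lemma mul_mul_cancel (hG : IsSAU G) (x : H →L[ℂ] H) : G * (G * x) = x := by
  rw [← mul_assoc, hG.2, one_mul]

lemma conj_mul (hG : IsSAU G) (x y : H →L[ℂ] H) :
    G * (x * y) * G = G * x * G * (G * y * G) := by
  simp only [mul_assoc, hG.mul_mul_cancel]

lemma conj_conj (hG : IsSAU G) (x : H →L[ℂ] H) : G * (G * x * G) * G = x := by
  rw [mul_assoc G x, hG.mul_mul_cancel, mul_assoc, hG.2, mul_one]

lemma star_conj (hG : IsSAU G) (x : H →L[ℂ] H) : star (G * x * G) = G * star x * G := by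
  rw [star_mul, star_mul, hG.1, mul_assoc]

lemma conj_isProjOp (hG : IsSAU G) (he : IsProjOp e) : IsProjOp (G * e * G) :=
  ⟨by rw [← hG.conj_mul, he.1], by rw [hG.star_conj, he.2]⟩

lemma conj_eq_self_iff (hG : IsSAU G) : G * x * G = x ↔ Commute G x := by
  constructor
  · intro h
    simpa [mul_assoc, hG.2, Commute, SemiconjBy] using congrArg (· * G) h
  · intro h
    rw [h.eq, mul_assoc, hG.2, mul_one]

end IsSAU

section Finite

variable {S : Type*} [SetLike S (H →L[ℂ] H)] [NonUnitalSubringClass S (H →L[ℂ] H)]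
  [StarMemClass S (H →L[ℂ] H)] {M : S} {e e' p u G : H →L[ℂ] H}

lemma finiteProj_iff (he : IsProjOp e) :
    FiniteProj (M : Set (H →L[ℂ] H)) e ↔
      ∀ w ∈ M, w * e = w → w * star w = e → star w * w = e := by
  constructor
  · intro hfin w hw hwe hwe'
    have hew : e * star w = star w := by simpa [he.2] using congrArg star hwe
    exact hfin _ (mul_mem (star_mem hw) hw) (he.star_mul_self_of_mul_star hwe')
      ⟨by rw [mul_assoc, hwe], by rw [← mul_assoc, hew]⟩ ⟨w, hw, rfl, hwe'⟩
  · rintro h f - hf ⟨hfe, -⟩ ⟨v, hv, hvf, hve⟩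
    have hfv : f * star v = star v := hf.mul_eq_self_of_mul_star (by rwa [star_star])
    have hvf' : v * f = v := by simpa [hf.2] using congrArg star hfv
    rw [← hvf]
    exact h v hv (by rw [← hvf', mul_assoc, hfe]) hve

namespace FiniteProj

lemma mono {M N : Set (H →L[ℂ] H)} (h : FiniteProj M e) (hNM : N ⊆ M) : FiniteProj N e :=
  fun f hf hfp hfe ⟨v, hv, hvfe⟩ => h f (hNM hf) hfp hfe ⟨v, hNM hv, hvfe⟩

lemma of_subProj (h : FiniteProj (M : Set (H →L[ℂ] H)) e) (he : IsProjOp e) (heM : e ∈ M)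
    (hp : IsProjOp p) (hpM : p ∈ M) (hpe : SubProj p e) :
    FiniteProj (M : Set (H →L[ℂ] H)) p := by
  rw [finiteProj_iff he] at h
  refine (finiteProj_iff hp).2 fun w hw hwp hwp' => ?_
  have hpw := hp.mul_eq_self_of_mul_star hwp'
  have hwe : w * e = w := by rw [← hwp, mul_assoc, hpe.1]
  have hew : e * w = w := by rw [← hpw, ← mul_assoc, hpe.2]
  have hpw' : p * star w = star w := by simpa [hp.2] using congrArg star hwp
  have hwp'' : star w * p = star w := by simpa [hp.2] using congrArg star hpw
  have hew' : e * star w = star w := by simpa [he.2] using congrArg star hwe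
  have hwe' : star w * e = star w := by simpa [he.2] using congrArg star hew
  have key := h (e - p + w) (add_mem (sub_mem heM hpM) hw)
    (by simp only [add_mul, sub_mul, he.1, hpe.1, hwe])
    (by
      simp only [star_add, star_sub, he.2, hp.2, add_mul, sub_mul, mul_add, mul_sub, he.1, hp.1,
        hpe.1, hpe.2, hwe, hwp, hew', hpw', hwp']
      abel)
  have hsum : e - p + star w * w = e := by
    refine Eq.trans ?_ key
    simp only [star_add, star_sub, he.2, hp.2, add_mul, sub_mul, mul_add, mul_sub, he.1, hp.1,
      hpe.1, hpe.2, hew, hpw, hwe', hwp'']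
    abel
  rwa [sub_add, sub_eq_self, sub_eq_zero, eq_comm] at hsum

lemma conj (h : FiniteProj (M : Set (H →L[ℂ] H)) e) (he : IsProjOp e)
    (hG : GradedBy (M : Set (H →L[ℂ] H)) G) : FiniteProj (M : Set (H →L[ℂ] H)) (G * e * G) := by
  refine (finiteProj_iff (hG.1.conj_isProjOp he)).2 fun w hw hwe hwe' => ?_
  have key := (finiteProj_iff he).1 h (G * w * G) (hG.2 w hw)
    (by rw [← hG.1.conj_conj e, ← hG.1.conj_mul, hwe])
    (by rw [hG.1.star_conj, ← hG.1.conj_mul, hwe', hG.1.conj_conj])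
  rw [← key, hG.1.star_conj, ← hG.1.conj_mul, hG.1.conj_conj]

lemma of_equiv (h : FiniteProj (M : Set (H →L[ℂ] H)) (star u * u)) (hu : u ∈ M)
    (hq : IsProjOp (u * star u)) : FiniteProj (M : Set (H →L[ℂ] H)) (u * star u) := by
  obtain ⟨q, hq_def⟩ : ∃ q, u * star u = q := ⟨_, rfl⟩
  rw [finiteProj_iff (hq.star_mul_self_of_mul_star rfl)] at h
  rw [hq_def] at hq ⊢
  have hqu := hq.mul_eq_self_of_mul_star hq_def
  refine (finiteProj_iff hq).2 fun w hw hwq hwq' => ?_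
  have hqw : q * w = w := hq.mul_eq_self_of_mul_star hwq'
  have hwq_star : q * star w = star w := by simpa [hq.2] using congrArg star hwq
  have hx_star : star (star u * w * u) = star u * star w * u := by
    simp only [star_mul, star_star, mul_assoc]
  have key := h (star u * w * u) (mul_mem (mul_mem (star_mem hu) hw) hu)
    (calc star u * w * u * (star u * u) = star u * (w * (u * star u)) * u := by noncomm_ring
      _ = star u * w * u := by rw [hq_def, hwq])
    (calc star u * w * u * star (star u * w * u)
        = star u * (w * (u * star u) * star w) * u := by rw [hx_star]; noncomm_ring
      _ = star u * (q * u) := by rw [hq_def, hwq, hwq']; noncomm_ring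
      _ = star u * u := by rw [hqu])
  rw [hx_star] at key
  calc star w * w = q * star w * q * (w * q) := by rw [hwq_star, hwq, mul_assoc, hqw]
    _ = u * (star u * star w * u * (star u * w * u)) * star u := by
        simp only [← hq_def]; noncomm_ring
    _ = u * star u * (u * star u) := by rw [key]; noncomm_ring
    _ = q := by rw [hq_def, hq.1]

lemma add (he : IsProjOp e) (heM : e ∈ M) (he' : IsProjOp e') (heM' : e' ∈ M)
    (hfin : FiniteProj (M : Set (H →L[ℂ] H)) e) (hfin' : FiniteProj (M : Set (H →L[ℂ] H)) e')
    (h : ∀ m ∈ M, e' * m * e = 0) : FiniteProj (M : Set (H →L[ℂ] H)) (e + e') := by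
  have h' (m) (hm : m ∈ M) : e * m * e' = 0 := by
    simpa [he.2, he'.2, mul_assoc] using congrArg star (h _ (star_mem hm))
  have hmul : e' * e = 0 := by simpa [mul_assoc, he.1] using h e heM
  have hmul' : e * e' = 0 := he.mul_eq_zero_comm he' hmul
  have hproj : IsProjOp (e + e') := he.add he' hmul
  refine (finiteProj_iff hproj).2 fun w hw hwq hwq' => ?_
  have corner {f : H →L[ℂ] H} (hf : IsProjOp f) (hfM : f ∈ M)
      (hffin : FiniteProj (M : Set (H →L[ℂ] H)) f) (hfq : f * (e + e') = f)
      (hfw : f * w * (e + e') = f * w * f) : star w * f * w = f := by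
    have key := (finiteProj_iff hf).1 hffin (f * w) (mul_mem hfM hw)
      (by rw [← hfw, mul_assoc, hwq])
      (by rw [star_mul, hf.2, mul_assoc, ← mul_assoc w, hwq', ← mul_assoc, hfq, hf.1])
    calc star w * f * w = star (f * w) * (f * w) := by
          rw [star_mul, hf.2, mul_assoc, mul_assoc, ← mul_assoc f, hf.1]
      _ = f := key
  calc star w * w = star w * ((e + e') * w) := by rw [hproj.mul_eq_self_of_mul_star hwq']
    _ = star w * e * w + star w * e' * w := by noncomm_ring
    _ = e + e' := by
      rw [corner he heM hfin (by rw [mul_add, he.1, hmul', add_zero])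
          (by rw [mul_add, h' w hw, add_zero]),
        corner he' heM' hfin' (by rw [mul_add, he'.1, hmul, zero_add])
          (by rw [mul_add, h w hw, zero_add])]

end FiniteProj

end Finite

section InvariantSubspace

variable {𝕜 E : Type*} [RCLike 𝕜] [NormedAddCommGroup E] [InnerProductSpace 𝕜 E] [CompleteSpace E]

lemma commute_starProjection_of_mapsTo {W : Submodule 𝕜 E} [W.HasOrthogonalProjection]
    {y : E →L[𝕜] E} (hy : Set.MapsTo y W W) (hy_star : Set.MapsTo (star y : E →L[𝕜] E) W W) :
    Commute y W.starProjection := by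
  ext v
  refine (Submodule.eq_starProjection_of_mem_of_inner_eq_zero
    (hy (W.starProjection_apply_mem v)) fun w hw => ?_).symm
  rw [ContinuousLinearMap.coe_coe, ← map_sub, ← ContinuousLinearMap.adjoint_inner_right]
  exact W.starProjection_inner_eq_zero v _ (hy_star hw)

/-- The range projection of `a`: the orthogonal projection onto the closure of its range. -/
def rangeProj (a : E →L[𝕜] E) : E →L[𝕜] E :=
  a.range.topologicalClosure.starProjection

variable {a b y : E →L[𝕜] E}

lemma rangeProj_mul_self (a : E →L[𝕜] E) : rangeProj a * a = a := by
  ext v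
  exact Submodule.starProjection_eq_self_iff.2 (Submodule.le_topologicalClosure _ ⟨v, rfl⟩)

lemma mul_rangeProj_eq_zero (h : b * a = 0) : b * rangeProj a = 0 := by
  ext v
  have hle : a.range.topologicalClosure ≤ b.ker :=
    Submodule.topologicalClosure_minimal _ (by rintro _ ⟨u, rfl⟩; exact congrArg (· u) h)
      b.isClosed_ker
  exact hle (Submodule.starProjection_apply_mem _ v)

lemma commute_rangeProj (h : Commute y a) (h' : Commute (star y) a) :
    Commute y (rangeProj a) := by
  have mapsTo {z : E →L[𝕜] E} (hz : Commute z a) :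
      Set.MapsTo z a.range.topologicalClosure a.range.topologicalClosure := by
    refine Set.MapsTo.closure ?_ z.continuous
    rintro _ ⟨u, rfl⟩
    exact ⟨z u, (congrArg (· u) hz.eq).symm⟩
  exact commute_starProjection_of_mapsTo (mapsTo h) (mapsTo h')

end InvariantSubspace

lemma isProjOp_rangeProj (a : H →L[ℂ] H) : IsProjOp (rangeProj a) :=
  ⟨Submodule.isIdempotentElem_starProjection _, isSelfAdjoint_starProjection _⟩

section VonNeumann

variable {M : VonNeumannAlgebra H} {G a : H →L[ℂ] H}

lemma mem_vonNeumannAlgebra_of_forall_commute (h : ∀ y ∈ M.commutant, Commute y a) : a ∈ M := by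
  rw [← M.commutant_commutant]
  exact VonNeumannAlgebra.mem_commutant_iff.2 h

lemma commute_of_mem_commutant {y : H →L[ℂ] H} (ha : a ∈ M) (hy : y ∈ M.commutant) : Commute y a :=
  (VonNeumannAlgebra.mem_commutant_iff.1 hy a ha).symm

lemma cfc_mem_vonNeumannAlgebra (ha : a ∈ M) (f : ℝ → ℝ) : cfc f a ∈ M :=
  mem_vonNeumannAlgebra_of_forall_commute fun _ hy =>
    ((commute_of_mem_commutant ha hy).symm.cfc_real f).symm

lemma abs_mem_vonNeumannAlgebra (ha : star a * a ∈ M) : CFC.abs a ∈ M :=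
  mem_vonNeumannAlgebra_of_forall_commute fun _ hy =>
    ((commute_of_mem_commutant ha hy).symm.cfcₙ_nnreal _).symm

lemma rangeProj_mem_vonNeumannAlgebra (ha : a ∈ M) : rangeProj a ∈ M :=
  mem_vonNeumannAlgebra_of_forall_commute fun _ hy =>
    commute_rangeProj (commute_of_mem_commutant ha hy)
      (commute_of_mem_commutant ha (star_mem hy))

lemma rangeProj_mem_evenPart (hG : IsSAU G) (ha : a ∈ evenPart (M : Set (H →L[ℂ] H)) G) :
    rangeProj a ∈ evenPart (M : Set (H →L[ℂ] H)) G := by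
  have hGa : Commute G a := hG.conj_eq_self_iff.1 ha.2
  exact ⟨rangeProj_mem_vonNeumannAlgebra ha.1,
    hG.conj_eq_self_iff.2 (commute_rangeProj hGa (by rwa [hG.1]))⟩

end VonNeumann

section SpectralCutoff

lemma exists_continuous_cutoff {x : ℝ} (hx : 0 < x) :
    ∃ k f : ℝ → ℝ, Continuous k ∧ Continuous f ∧ (∀ t, k t * t * k t * f t = f t) ∧ f x ≠ 0 := by
  have hδ : 0 < x / 2 := half_pos hx
  have hmax (t : ℝ) : √(max t (x / 2)) ≠ 0 := (Real.sqrt_pos.2 (lt_max_of_lt_right hδ)).ne'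
  refine ⟨fun t => (√(max t (x / 2)))⁻¹, fun t => max (t - x / 2) 0,
    Continuous.inv₀ (by fun_prop) hmax, by fun_prop, fun t => ?_, ?_⟩
  · rcases le_total t (x / 2) with ht | ht
    · simp [ht]
    · have ht0 : 0 < t := hδ.trans_le ht
      beta_reduce
      rw [max_eq_left ht, mul_right_comm (√t)⁻¹, ← mul_inv, Real.mul_self_sqrt ht0.le,
        inv_mul_cancel₀ ht0.ne', one_mul]
  · beta_reduce
    rw [sub_half, max_eq_left hδ.le]
    exact hδ.ne'

lemma exists_cfc_mul_mul_cfc_mul_cfc_eq {A : Type*} [CStarAlgebra A] [PartialOrder A]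
    [StarOrderedRing A] {h : A} (hnonneg : 0 ≤ h) (hne : h ≠ 0) :
    ∃ k f : ℝ → ℝ, cfc k h * h * cfc k h * cfc f h = cfc f h ∧ cfc f h ≠ 0 := by
  obtain ⟨k, f, hk, hf, hkf, hfh⟩ := exists_continuous_cutoff (norm_pos_iff.2 hne)
  have hself : IsSelfAdjoint h := hnonneg.isSelfAdjoint
  refine ⟨k, f, ?_, fun hzero => ?_⟩
  · calc cfc k h * h * cfc k h * cfc f h = cfc (fun t => k t * t * k t * f t) h := by
          rw [cfc_mul (fun t => k t * t * k t) f h, cfc_mul (fun t => k t * t) k h,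
            cfc_mul k (fun t => t) h, cfc_id' ℝ h]
      _ = cfc f h := by simp only [hkf]
  · have : Nontrivial A := ⟨h, 0, hne⟩
    have hmem : f ‖h‖ ∈ spectrum ℝ (cfc f h) := by
      rw [cfc_map_spectrum f h]
      exact Set.mem_image_of_mem f (CStarAlgebra.norm_mem_spectrum_of_nonneg hnonneg)
    rw [hzero, spectrum.zero_eq] at hmem
    exact hfh hmem

end SpectralCutoff

lemma abs_mul_eq_zero {A : Type*} [CStarAlgebra A] [PartialOrder A] [StarOrderedRing A] {a b : A}
    (h : a * b = 0) : CFC.abs a * b = 0 := by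
  rw [← CStarRing.star_mul_self_eq_zero_iff, star_mul, (CFC.abs_nonneg a).isSelfAdjoint.star_eq,
    mul_assoc, ← mul_assoc (CFC.abs a), CFC.abs_mul_abs, mul_assoc, h, mul_zero, mul_zero]

section Graded

variable {M : VonNeumannAlgebra H} {G E s z : H →L[ℂ] H}

lemma cfc_mem_evenPart (hG : IsSAU G) (hz : z ∈ evenPart (M : Set (H →L[ℂ] H)) G) (f : ℝ → ℝ) :
    cfc f z ∈ evenPart (M : Set (H →L[ℂ] H)) G :=
  ⟨cfc_mem_vonNeumannAlgebra hz.1 f,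
    hG.conj_eq_self_iff.2 ((hG.conj_eq_self_iff.1 hz.2).symm.cfc_real f).symm⟩

lemma exists_isProjOp_mem_evenPart (hG : IsSAU G) (hz : z ≠ 0)
    (hzz : z * star z ∈ evenPart (M : Set (H →L[ℂ] H)) G) :
    ∃ q ∈ evenPart (M : Set (H →L[ℂ] H)) G, IsProjOp q ∧ q ≠ 0 ∧
      ∃ c ∈ M, c * z * star (c * z) = q := by
  obtain ⟨k, f, hkf, hf⟩ := exists_cfc_mul_mul_cfc_mul_cfc_eq (mul_star_self_nonneg z)
    (mt (CStarRing.mul_star_self_eq_zero_iff z).1 hz)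
  set a := cfc k (z * star z)
  set b := cfc f (z * star z)
  have ha : star a = a := cfc_predicate k (z * star z)
  have hq := isProjOp_rangeProj b
  have hqM := rangeProj_mem_evenPart hG (cfc_mem_evenPart hG hzz f)
  have hfix : a * (z * star z) * a * rangeProj b = rangeProj b := by
    have := mul_rangeProj_eq_zero (a := b) (b := a * (z * star z) * a - 1)
      (by rw [sub_mul, hkf, one_mul, sub_self])
    rwa [sub_mul, one_mul, sub_eq_zero] at this
  refine ⟨rangeProj b, hqM, hq, fun h0 => hf ?_, rangeProj b * a,
    mul_mem hqM.1 (cfc_mem_vonNeumannAlgebra hzz.1 k), ?_⟩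
  · rw [← rangeProj_mul_self b, h0, zero_mul]
  · calc rangeProj b * a * z * star (rangeProj b * a * z)
        = rangeProj b * (a * (z * star z) * a * rangeProj b) := by
          simp only [star_mul, ha, hq.2]; noncomm_ring
      _ = rangeProj b := by rw [hfix, hq.1]

lemma eq_zero_of_mul_star_self_mem_evenPart (hG : IsSAU G)
    (hIII : TypeIII (evenPart (M : Set (H →L[ℂ] H)) G)) (hE : IsProjOp E) (hEM : E ∈ M)
    (hfin : FiniteProj (M : Set (H →L[ℂ] H)) E) (hz : z ∈ M) (hzE : z * E = z)
    (hzz : z * star z ∈ evenPart (M : Set (H →L[ℂ] H)) G) : z = 0 := by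
  by_contra hz0
  obtain ⟨q, hqM, hq, hq0, c, hc, rfl⟩ := exists_isProjOp_mem_evenPart hG hz0 hzz
  set u := c * z
  have hu : u ∈ M := mul_mem hc hz
  have huE : u * E = u := by rw [mul_assoc, hzE]
  have hEu : E * star u = star u := by simpa [hE.2] using congrArg star huE
  have hfin_p : FiniteProj (M : Set (H →L[ℂ] H)) (star u * u) :=
    hfin.of_subProj hE hEM (hq.star_mul_self_of_mul_star rfl) (mul_mem (star_mem hu) hu)
      ⟨by rw [mul_assoc, huE], by rw [← mul_assoc, hEu]⟩
  exact hq0 (hIII _ hqM hq ((hfin_p.of_equiv hu hq).mono fun _ hx => hx.1))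

lemma conj_abs_add_mul_star_self (hG : IsSAU G) (hs : IsSelfAdjoint s) :
    G * ((CFC.abs s + G * s) * star (CFC.abs s + G * s)) * G =
      (CFC.abs s + G * s) * star (CFC.abs s + G * s) := by
  obtain ⟨b, hb⟩ : ∃ b, CFC.abs s = b := ⟨_, rfl⟩
  have hb_star : star b = b := hb ▸ (CFC.abs_nonneg s).isSelfAdjoint
  have hb_comm : b * s = s * b := hb ▸ CFC.commute_abs_self s
  have hb_sq : b * b = s * s := by rw [← hb, CFC.abs_mul_abs, hs.star_eq]
  have hexpand : (b + G * s) * star (b + G * s) =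
      s * s + G * (s * s) * G + (s * b * G + G * (s * b)) := by
    calc (b + G * s) * star (b + G * s)
        = b * b + G * (s * s) * G + (b * s * G + G * (s * b)) := by
          simp only [star_add, star_mul, hb_star, hs.star_eq, hG.1]; noncomm_ring
      _ = _ := by rw [hb_sq, hb_comm]
  simp only [hb, hexpand, mul_add, add_mul, hG.conj_conj]
  simp only [mul_assoc, hG.mul_mul_cancel, hG.2, mul_one]
  abel

lemma eq_zero_of_isSelfAdjoint_of_mul_mem (hG : IsSAU G)
    (hIII : TypeIII (evenPart (M : Set (H →L[ℂ] H)) G)) (hE : IsProjOp E) (hEM : E ∈ M)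
    (hfin : FiniteProj (M : Set (H →L[ℂ] H)) E) (hs : IsSelfAdjoint s) (hGs : G * s ∈ M)
    (hsE : s * E = s) : s = 0 := by
  have hss : star s * s = star (G * s) * (G * s) := by
    rw [star_mul, hG.1, mul_assoc, hG.mul_mul_cancel]
  have habsM : CFC.abs s ∈ M :=
    abs_mem_vonNeumannAlgebra (hss ▸ mul_mem (star_mem hGs) hGs)
  have habsE : CFC.abs s * E = CFC.abs s := by
    have := abs_mul_eq_zero (a := s) (b := E - 1) (by rw [mul_sub, hsE, mul_one, sub_self])
    rwa [mul_sub, mul_one, sub_eq_zero] at this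
  have abs_add {r : H →L[ℂ] H} (hr : IsSelfAdjoint r) (hGr : G * r ∈ M) (hrE : r * E = r)
      (habs : CFC.abs r = CFC.abs s) : CFC.abs s + G * r = 0 := by
    have hzM : CFC.abs s + G * r ∈ M := add_mem habsM hGr
    refine eq_zero_of_mul_star_self_mem_evenPart hG hIII hE hEM hfin hzM
      (by rw [add_mul, habsE, mul_assoc, hrE]) ⟨mul_mem hzM (star_mem hzM), ?_⟩
    simpa only [habs] using conj_abs_add_mul_star_self hG hr
  have hpos := abs_add hs hGs hsE rfl
  have hneg := abs_add hs.neg (by simpa using hGs) (by simpa using hsE) (CFC.abs_neg s)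
  rw [mul_neg] at hneg
  have htwo : (2 : ℂ) • CFC.abs s = 0 := by
    calc (2 : ℂ) • CFC.abs s = (CFC.abs s + G * s) + (CFC.abs s + -(G * s)) := by
          rw [two_smul]; abel
      _ = 0 := by rw [hpos, hneg, add_zero]
  exact CFC.abs_eq_zero_iff.1 ((smul_eq_zero.1 htwo).resolve_left two_ne_zero)

lemma eq_zero_of_mul_mem (hG : GradedBy (M : Set (H →L[ℂ] H)) G)
    (hIII : TypeIII (evenPart (M : Set (H →L[ℂ] H)) G)) (hE : IsProjOp E) (hEM : E ∈ M)
    (hfin : FiniteProj (M : Set (H →L[ℂ] H)) E) (hGs : G * s ∈ M)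
    (hEs : E * s = s) (hsE : s * E = s) : s = 0 := by
  have star_eq_neg {t : H →L[ℂ] H} (hGt : G * t ∈ M) (hEt : E * t = t) (htE : t * E = t) :
      star t = -t := by
    have hGt' : G * star t ∈ M := by
      simpa [mul_assoc, hG.1.1, hG.1.2] using hG.2 _ (star_mem hGt)
    have htE' : star t * E = star t := by simpa [hE.2] using congrArg star hEt
    exact eq_neg_of_add_eq_zero_right (eq_zero_of_isSelfAdjoint_of_mul_mem hG.1 hIII hE hEM hfin
      (.add_star_self t) (by rw [mul_add]; exact add_mem hGt hGt') (by rw [add_mul, htE, htE']))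
  have hs : star s = -s := star_eq_neg hGs hEs hsE
  have hIs : star (Complex.I • s) = -(Complex.I • s) :=
    star_eq_neg (by rw [mul_smul_comm]; exact M.toStarSubalgebra.smul_mem hGs _)
      (by rw [mul_smul_comm, hEs]) (by rw [smul_mul_assoc, hsE])
  have hIs' : Complex.I • s = -(Complex.I • s) := by
    simpa only [star_smul, hs, RCLike.star_def, Complex.conj_I, smul_neg, neg_smul, neg_neg]
      using hIs
  rw [eq_neg_iff_add_eq_zero, ← two_smul ℂ, smul_smul] at hIs'
  exact (smul_eq_zero.1 hIs').resolve_left (by simp)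

theorem typeIII_of_typeIII_evenPart (hG : GradedBy (M : Set (H →L[ℂ] H)) G)
    (hIII : TypeIII (evenPart (M : Set (H →L[ℂ] H)) G)) : TypeIII (M : Set (H →L[ℂ] H)) := by
  intro E hEM hE hfin
  have hE' : IsProjOp (G * E * G) := hG.1.conj_isProjOp hE
  have hEM' : G * E * G ∈ M := hG.2 E hEM
  have horth (m) (hm : m ∈ M) : G * E * G * m * E = 0 := by
    have hzero : E * (G * m) * E = 0 := by
      refine eq_zero_of_mul_mem hG hIII hE hEM hfin ?_ (by simp only [← mul_assoc, hE.1])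
        (by rw [mul_assoc, hE.1])
      rw [← mul_assoc, ← mul_assoc, ← mul_assoc]
      exact mul_mem (mul_mem hEM' hm) hEM
    calc G * E * G * m * E = G * (E * (G * m) * E) := by noncomm_ring
      _ = 0 := by rw [hzero, mul_zero]
  have hmul : G * E * G * E = 0 := by simpa using horth 1 (one_mem M)
  have hsum : E + G * E * G = 0 := by
    refine hIII _ ⟨add_mem hEM hEM', ?_⟩ (hE.add hE' hmul)
      ((hfin.add hE hEM hE' hEM' (hfin.conj hE hG) horth).mono fun _ hx => hx.1)
    rw [mul_add, add_mul, hG.1.conj_conj, add_comm]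
  calc E = (E + G * E * G) * E := by rw [add_mul, hE.1, hmul, add_zero]
    _ = 0 := by rw [hsum, zero_mul]

end Graded

section Density

variable {𝕜 E : Type*} [RCLike 𝕜] [NormedAddCommGroup E] [InnerProductSpace 𝕜 E]

/-- The `(i, j)` entry of an operator on a finite Hilbert sum of copies of a space. -/
def matrixEntry {ι : Type*} [DecidableEq ι]
    (Q : PiLp 2 (fun _ : ι => E) →L[𝕜] PiLp 2 (fun _ : ι => E)) (i j : ι) : E →L[𝕜] E :=
  PiLp.proj 2 (fun _ : ι => E) i ∘L Q ∘L
    ((PiLp.continuousLinearEquiv 2 𝕜 (fun _ : ι => E)).symm :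
      (ι → E) →L[𝕜] PiLp 2 (fun _ : ι => E)) ∘L ContinuousLinearMap.single 𝕜 (fun _ : ι => E) j

lemma mem_centralizer_of_coe_mem_closure {S : Set (E →L[𝕜] E)} {x : E →L[𝕜] E}
    (hx : ⇑x ∈ closure ((fun a : E →L[𝕜] E => ⇑a) '' S.centralizer)) : x ∈ S.centralizer := by
  intro y hy
  have hclosed : IsClosed (⋂ ξ, {f : E → E | y (f ξ) = f (y ξ)}) :=
    isClosed_iInter fun ξ => isClosed_eq (by fun_prop) (by fun_prop)
  have hsub : (fun a : E →L[𝕜] E => ⇑a) '' S.centralizer ⊆ ⋂ ξ, {f | y (f ξ) = f (y ξ)} := by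
    rintro _ ⟨a, ha, rfl⟩
    exact Set.mem_iInter.2 fun ξ => DFunLike.congr_fun (ha y hy) ξ
  exact ContinuousLinearMap.ext (Set.mem_iInter.1 (closure_minimal hsub hclosed hx))

variable {ι : Type*} [Fintype ι] [DecidableEq ι]
  {Q : PiLp 2 (fun _ : ι => E) →L[𝕜] PiLp 2 (fun _ : ι => E)}

lemma apply_eq_sum_matrixEntry (u : PiLp 2 (fun _ : ι => E)) (i : ι) :
    Q u i = ∑ j, matrixEntry Q i j (u j) := by
  have hu : u = ∑ j, PiLp.single 2 j (u j) := by
    ext i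
    simp [WithLp.ofLp_sum, PiLp.ofLp_single, Finset.sum_apply]
  calc Q u i = (∑ j, Q (PiLp.single 2 j (u j))) i := by rw [← map_sum, ← hu]
    _ = ∑ j, matrixEntry Q i j (u j) := by
      rw [WithLp.ofLp_sum, Finset.sum_apply]
      rfl

variable [CompleteSpace E]

/-- The amplification `a ↦ 1 ⊗ a`, where `1 ⊗ a` acts diagonally on the Hilbert sum of `ι` copies
of the space. -/
def amplify (𝕜 E ι : Type*) [RCLike 𝕜] [NormedAddCommGroup E] [InnerProductSpace 𝕜 E]
    [CompleteSpace E] [Fintype ι] :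
    (E →L[𝕜] E) →⋆ₐ[𝕜] (PiLp 2 (fun _ : ι => E) →L[𝕜] PiLp 2 (fun _ : ι => E)) where
  toFun a := ((PiLp.continuousLinearEquiv 2 𝕜 (fun _ : ι => E)).symm :
      (ι → E) →L[𝕜] PiLp 2 (fun _ : ι => E)) ∘L
    ContinuousLinearMap.pi fun i => a ∘L PiLp.proj 2 (fun _ : ι => E) i
  map_one' := rfl
  map_mul' _ _ := rfl
  map_zero' := rfl
  map_add' _ _ := rfl
  commutes' _ := rfl
  map_star' a := by
    refine (ContinuousLinearMap.eq_adjoint_iff _ _).2 fun u w => ?_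
    simp only [PiLp.inner_apply]
    exact Finset.sum_congr rfl fun i _ => a.adjoint_inner_left (w i) (u i)

@[simp]
lemma amplify_apply {ι : Type*} [Fintype ι] (a : E →L[𝕜] E) (u : PiLp 2 (fun _ : ι => E))
    (i : ι) : amplify 𝕜 E ι a u i = a (u i) := rfl

lemma commute_amplify_iff {a : E →L[𝕜] E} :
    Commute (amplify 𝕜 E ι a) Q ↔ ∀ i j, Commute a (matrixEntry Q i j) := by
  constructor
  · intro h i j
    ext v
    have hsingle : amplify 𝕜 E ι a (PiLp.single 2 j v) = PiLp.single 2 j (a v) := by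
      ext k
      by_cases hkj : k = j <;> simp [hkj]
    have hv : amplify 𝕜 E ι a (Q (PiLp.single 2 j v)) = Q (amplify 𝕜 E ι a (PiLp.single 2 j v)) :=
      congrArg (· (PiLp.single 2 j v)) h.eq
    rw [hsingle] at hv
    exact congrArg (· i) hv
  · intro h
    ext u i
    change amplify 𝕜 E ι a (Q u) i = Q (amplify 𝕜 E ι a u) i
    rw [amplify_apply, apply_eq_sum_matrixEntry, apply_eq_sum_matrixEntry, map_sum]
    exact Finset.sum_congr rfl fun j _ => congrArg (· (u j)) (h i j).eq

lemma apply_mem_closure_of_mem_centralizer_centralizer {A : StarSubalgebra 𝕜 (E →L[𝕜] E)}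
    {x : E →L[𝕜] E} (hx : x ∈ Set.centralizer (Set.centralizer (A : Set (E →L[𝕜] E)))) (u : E) :
    x u ∈ closure ((fun a : E →L[𝕜] E => a u) '' A) := by
  let W : Submodule 𝕜 E := ((Subalgebra.toSubmodule A.toSubalgebra).map
    (ContinuousLinearMap.apply 𝕜 E u).toLinearMap).topologicalClosure
  have hu : u ∈ W := Submodule.le_topologicalClosure _ ⟨1, one_mem A, rfl⟩
  have mapsTo {a : E →L[𝕜] E} (ha : a ∈ A) : Set.MapsTo a W W := by
    refine Set.MapsTo.closure ?_ a.continuous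
    rintro _ ⟨b, hb, rfl⟩
    exact ⟨a * b, A.mul_mem ha hb, rfl⟩
  have hW : W.starProjection ∈ Set.centralizer (A : Set (E →L[𝕜] E)) := fun a ha =>
    commute_starProjection_of_mapsTo (mapsTo ha) (mapsTo (star_mem ha))
  have hxu : W.starProjection (x u) = x (W.starProjection u) := congrArg (· u) (hx _ hW)
  rw [Submodule.starProjection_eq_self_iff.2 hu] at hxu
  exact Submodule.starProjection_eq_self_iff.1 hxu

theorem coe_mem_closure_of_mem_centralizer_centralizer {A : StarSubalgebra 𝕜 (E →L[𝕜] E)}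
    {x : E →L[𝕜] E} (hx : x ∈ Set.centralizer (Set.centralizer (A : Set (E →L[𝕜] E)))) :
    ⇑x ∈ closure ((fun a : E →L[𝕜] E => ⇑a) '' A) := by
  classical
  refine mem_closure_iff.2 fun o ho hxo => ?_
  obtain ⟨I, U, hU, hIU⟩ := isOpen_pi_iff.1 ho x hxo
  have hamp : amplify 𝕜 E I x ∈
      Set.centralizer (Set.centralizer (A.map (amplify 𝕜 E I) : Set _)) := fun Q hQ =>
    (commute_amplify_iff.2 fun i j => (hx _ fun a ha =>
      commute_amplify_iff.1 (hQ _ ⟨a, ha, rfl⟩) i j).symm).symm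
  obtain ⟨_, hV, _, ⟨a, ha, rfl⟩, rfl⟩ := mem_closure_iff.1
    (apply_mem_closure_of_mem_centralizer_centralizer hamp (WithLp.toLp 2 fun v : I => (v : E)))
    (⋂ v : I, {w | w v ∈ U v})
    (isOpen_iInter_of_finite fun v => (hU v v.2).1.preimage (PiLp.continuous_apply 2 _ v))
    (Set.mem_iInter.2 fun v => (hU v v.2).2)
  exact ⟨a, hIU fun v hv => Set.mem_iInter.1 hV ⟨v, hv⟩, a, ha, rfl⟩

end Density

section Generated

variable {S S₀ S₁ : Set (H →L[ℂ] H)} {P : Submonoid (H →L[ℂ] H)} {G x : H →L[ℂ] H}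

/-- The von Neumann algebra generated by a star-closed set, with carrier `genVN S`. -/
def genVNAlgebra (S : Set (H →L[ℂ] H)) (hS : ∀ a ∈ S, star a ∈ S) : VonNeumannAlgebra H where
  carrier := genVN S
  mul_mem' := Set.mul_mem_centralizer
  add_mem' := Set.add_mem_centralizer
  algebraMap_mem' c _ _ := (Algebra.commutes c _).symm
  star_mem' := Set.star_mem_centralizer' fun _ => Set.star_mem_centralizer' hS
  centralizer_centralizer' := Set.centralizer_centralizer_centralizer S.centralizer

lemma IsSAU.conj_mem_centralizer (hG : IsSAU G) (hS : ∀ s ∈ S, G * s * G ∈ genVN S)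
    (hx : x ∈ S.centralizer) : G * x * G ∈ S.centralizer := by
  intro s hs
  calc s * (G * x * G) = G * (G * s * G * x) * G := by rw [hG.conj_mul, hG.conj_conj]
    _ = G * (x * (G * s * G)) * G := by rw [hS s hs x hx]
    _ = G * x * G * s := by rw [hG.conj_mul, hG.conj_conj]

lemma gradedBy_genVN (hG : IsSAU G) (hS : ∀ s ∈ S, G * s * G ∈ genVN S) : GradedBy (genVN S) G :=
  ⟨hG, fun _ hx => hG.conj_mem_centralizer (fun _ hy =>
    Set.subset_centralizer_centralizer (hG.conj_mem_centralizer hS hy)) hx⟩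

lemma add_conj_mem_genVN (hstar : ∀ s ∈ P, star s ∈ P) (hP : (P : Set (H →L[ℂ] H)) = S₀ ∪ S₁)
    (h₀ : ∀ s ∈ S₀, G * s * G = s) (h₁ : ∀ s ∈ S₁, G * s * G = -s)
    (hx : x ∈ StarAlgebra.adjoin ℂ (P : Set (H →L[ℂ] H))) : x + G * x * G ∈ genVN S₀ := by
  have hclosure : Submonoid.closure ((P : Set (H →L[ℂ] H)) ∪ star (P : Set (H →L[ℂ] H))) = P := by
    have hle : star (P : Set (H →L[ℂ] H)) ⊆ P := fun s hs => star_star s ▸ hstar _ hs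
    rw [Set.union_eq_self_of_subset_right hle, Submonoid.closure_eq]
  have hspan : x ∈ Submodule.span ℂ (P : Set (H →L[ℂ] H)) := by
    rw [← hclosure, ← StarAlgebra.adjoin_eq_span]
    exact hx
  let V : Submodule ℂ (H →L[ℂ] H) := (Subalgebra.centralizer ℂ S₀.centralizer).toSubmodule
  have hle : Submodule.span ℂ (P : Set (H →L[ℂ] H)) ≤
      V.comap (LinearMap.id + LinearMap.mulLeftRight ℂ (G, G)) := by
    rw [Submodule.span_le, hP]
    rintro s (hs | hs)
    · have hsV : s ∈ V := Set.subset_centralizer_centralizer hs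
      simpa [h₀ s hs] using V.add_mem hsV hsV
    · simp [h₁ s hs]
  change x + G * x * G ∈ V
  simpa using hle hspan

theorem evenPart_genVN (hG : IsSAU G) (hstar : ∀ s ∈ P, star s ∈ P)
    (hP : (P : Set (H →L[ℂ] H)) = S₀ ∪ S₁)
    (h₀ : ∀ s ∈ S₀, G * s * G = s) (h₁ : ∀ s ∈ S₁, G * s * G = -s) :
    evenPart (genVN (P : Set (H →L[ℂ] H))) G = genVN S₀ := by
  have hS₀ : S₀ ⊆ P := hP ▸ Set.subset_union_left
  ext x
  constructor
  · rintro ⟨hxP, hxG⟩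
    have hx := coe_mem_closure_of_mem_centralizer_centralizer
      (A := StarAlgebra.adjoin ℂ (P : Set (H →L[ℂ] H)))
      (Set.centralizer_subset (Set.centralizer_subset (StarAlgebra.subset_adjoin ℂ _)) hxP)
    have hdouble : ⇑(x + G * x * G) ∈
        closure ((fun a : H →L[ℂ] H => ⇑a) '' S₀.centralizer.centralizer) := by
      refine map_mem_closure (f := fun f : H → H => fun ξ => f ξ + G (f (G ξ)))
        (by fun_prop) hx ?_
      rintro _ ⟨a, ha, rfl⟩
      exact ⟨a + G * a * G, add_conj_mem_genVN hstar hP h₀ h₁ ha, rfl⟩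
    have htwo := mem_centralizer_of_coe_mem_closure hdouble
    rw [hxG, ← two_smul ℂ] at htwo
    exact ((Subalgebra.centralizer ℂ S₀.centralizer).toSubmodule.smul_mem_iff two_ne_zero).1 htwo
  · intro hx
    refine ⟨Set.centralizer_subset (Set.centralizer_subset hS₀) hx, hG.conj_eq_self_iff.2 ?_⟩
    exact hx G fun s hs => (hG.conj_eq_self_iff.1 (h₀ s hs)).symm

theorem typeIII_genVN_of_even (hG : IsSAU G) (hstar : ∀ s ∈ P, star s ∈ P)
    (hP : (P : Set (H →L[ℂ] H)) = S₀ ∪ S₁)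
    (h₀ : ∀ s ∈ S₀, G * s * G = s) (h₁ : ∀ s ∈ S₁, G * s * G = -s) (hIII : TypeIII (genVN S₀)) :
    TypeIII (genVN (P : Set (H →L[ℂ] H))) := by
  have hconj (s) (hs : s ∈ P) : G * s * G ∈ genVN (P : Set (H →L[ℂ] H)) := by
    have hs' : s ∈ genVNAlgebra P hstar := Set.subset_centralizer_centralizer hs
    rcases (hP.le hs : s ∈ S₀ ∪ S₁) with h | h
    · rwa [h₀ s h]
    · rw [h₁ s h]
      exact neg_mem hs'
  refine typeIII_of_typeIII_evenPart (M := genVNAlgebra P hstar) (gradedBy_genVN hG hconj) ?_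
  rw [← evenPart_genVN hG hstar hP h₀ h₁] at hIII
  exact hIII

end Generated

section TensorMap

variable {H₁ H₂ K : Type*}
  [NormedAddCommGroup H₁] [InnerProductSpace ℂ H₁] [CompleteSpace H₁]
  [NormedAddCommGroup H₂] [InnerProductSpace ℂ H₂] [CompleteSpace H₂]
  [NormedAddCommGroup K] [InnerProductSpace ℂ K] [CompleteSpace K]
  {T : (H₁ →L[ℂ] H₁) → (H₂ →L[ℂ] H₂) → (K →L[ℂ] K)}
  {R₁ : StarSubalgebra ℂ (H₁ →L[ℂ] H₁)} {Γ₁ : H₁ →L[ℂ] H₁}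
  {R₂ : StarSubalgebra ℂ (H₂ →L[ℂ] H₂)} {Γ₂ : H₂ →L[ℂ] H₂}

namespace IsTensorMap

lemma map_one (hT : IsTensorMap T) : T 1 1 = 1 := hT.1

lemma map_mul (hT : IsTensorMap T) (A C : H₁ →L[ℂ] H₁) (B D : H₂ →L[ℂ] H₂) :
    T A B * T C D = T (A * C) (B * D) := hT.2.1 A B C D

lemma map_star (hT : IsTensorMap T) (A : H₁ →L[ℂ] H₁) (B : H₂ →L[ℂ] H₂) :
    star (T A B) = T (star A) (star B) := hT.2.2.1 A B

lemma map_neg (hT : IsTensorMap T) (A : H₁ →L[ℂ] H₁) (B : H₂ →L[ℂ] H₂) :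
    T A (-B) = -T A B := by
  simpa using hT.2.2.2.2.2.2 (-1) A B

lemma isSAU (hT : IsTensorMap T) (hΓ₂ : IsSAU Γ₂) : IsSAU (T 1 Γ₂) :=
  ⟨by rw [hT.map_star, star_one, hΓ₂.1], by rw [hT.map_mul, one_mul, hΓ₂.2, hT.map_one]⟩

lemma conj (hT : IsTensorMap T) (A : H₁ →L[ℂ] H₁) (B : H₂ →L[ℂ] H₂) :
    T 1 Γ₂ * T A B * T 1 Γ₂ = T A (Γ₂ * B * Γ₂) := by
  rw [hT.map_mul, hT.map_mul, one_mul, mul_one]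

end IsTensorMap

/-- The elementary tensors `A ⊗ B` with `B` even: the even generators of the graded tensor
product. -/
def evenTensors (T : (H₁ →L[ℂ] H₁) → (H₂ →L[ℂ] H₂) → (K →L[ℂ] K))
    (R₁ : Set (H₁ →L[ℂ] H₁)) (R₂ : Set (H₂ →L[ℂ] H₂)) (Γ₂ : H₂ →L[ℂ] H₂) : Set (K →L[ℂ] K) :=
  {x | ∃ A ∈ R₁, ∃ B ∈ evenPart R₂ Γ₂, x = T A B}

/-- The operators `A Γ₁ ⊗ B` with `B` odd: the odd generators of the graded tensor product. -/
def oddTensors (T : (H₁ →L[ℂ] H₁) → (H₂ →L[ℂ] H₂) → (K →L[ℂ] K))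
    (R₁ : Set (H₁ →L[ℂ] H₁)) (Γ₁ : H₁ →L[ℂ] H₁)
    (R₂ : Set (H₂ →L[ℂ] H₂)) (Γ₂ : H₂ →L[ℂ] H₂) : Set (K →L[ℂ] K) :=
  {x | ∃ A ∈ R₁, ∃ B ∈ oddPart R₂ Γ₂, x = T (A * Γ₁) B}

lemma mul_mem_evenTensors_union_oddTensors (hT : IsTensorMap T)
    (h₁ : GradedBy (R₁ : Set (H₁ →L[ℂ] H₁)) Γ₁) (hΓ₂ : IsSAU Γ₂) {x y : K →L[ℂ] K}
    (hx : x ∈ evenTensors T R₁ R₂ Γ₂ ∪ oddTensors T R₁ Γ₁ R₂ Γ₂)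
    (hy : y ∈ evenTensors T R₁ R₂ Γ₂ ∪ oddTensors T R₁ Γ₁ R₂ Γ₂) :
    x * y ∈ evenTensors T R₁ R₂ Γ₂ ∪ oddTensors T R₁ Γ₁ R₂ Γ₂ := by
  rcases hx with ⟨A, hA, B, ⟨hB, hB'⟩, rfl⟩ | ⟨A, hA, B, ⟨hB, hB'⟩, rfl⟩ <;>
  rcases hy with ⟨C, hC, D, ⟨hD, hD'⟩, rfl⟩ | ⟨C, hC, D, ⟨hD, hD'⟩, rfl⟩ <;>
  rw [hT.map_mul]
  · exact .inl ⟨_, R₁.mul_mem hA hC, _, ⟨R₂.mul_mem hB hD, by rw [hΓ₂.conj_mul, hB', hD']⟩, rfl⟩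
  · exact .inr ⟨_, R₁.mul_mem hA hC, _,
      ⟨R₂.mul_mem hB hD, by rw [hΓ₂.conj_mul, hB', hD', mul_neg]⟩, by rw [mul_assoc]⟩
  · exact .inr ⟨_, R₁.mul_mem hA (h₁.2 C hC), _,
      ⟨R₂.mul_mem hB hD, by rw [hΓ₂.conj_mul, hB', hD', neg_mul]⟩,
      by simp only [mul_assoc, h₁.1.2, mul_one]⟩
  · exact .inl ⟨_, R₁.mul_mem hA (h₁.2 C hC), _,
      ⟨R₂.mul_mem hB hD, by rw [hΓ₂.conj_mul, hB', hD', neg_mul_neg]⟩, by simp only [mul_assoc]⟩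

lemma star_mem_evenTensors_union_oddTensors (hT : IsTensorMap T)
    (h₁ : GradedBy (R₁ : Set (H₁ →L[ℂ] H₁)) Γ₁) (hΓ₂ : IsSAU Γ₂) {x : K →L[ℂ] K}
    (hx : x ∈ evenTensors T R₁ R₂ Γ₂ ∪ oddTensors T R₁ Γ₁ R₂ Γ₂) :
    star x ∈ evenTensors T R₁ R₂ Γ₂ ∪ oddTensors T R₁ Γ₁ R₂ Γ₂ := by
  rcases hx with ⟨A, hA, B, ⟨hB, hB'⟩, rfl⟩ | ⟨A, hA, B, ⟨hB, hB'⟩, rfl⟩ <;>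
  rw [hT.map_star]
  · exact .inl ⟨_, star_mem hA, _, ⟨star_mem hB, by rw [← hΓ₂.star_conj, hB']⟩, rfl⟩
  · exact .inr ⟨_, h₁.2 _ (star_mem hA), _,
      ⟨star_mem hB, by rw [← hΓ₂.star_conj, hB', star_neg]⟩,
      by rw [star_mul, h₁.1.1, mul_assoc, h₁.1.2, mul_one]⟩

/-- The monoid of all operators `A Γ₁^(∂B) ⊗ B` with `B` homogeneous, whose double commutant is the
graded tensor product. -/
def gradedTensors (hT : IsTensorMap T) (h₁ : GradedBy (R₁ : Set (H₁ →L[ℂ] H₁)) Γ₁)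
    (R₂ : StarSubalgebra ℂ (H₂ →L[ℂ] H₂)) (hΓ₂ : IsSAU Γ₂) : Submonoid (K →L[ℂ] K) where
  carrier := evenTensors T R₁ R₂ Γ₂ ∪ oddTensors T R₁ Γ₁ R₂ Γ₂
  mul_mem' := mul_mem_evenTensors_union_oddTensors hT h₁ hΓ₂
  one_mem' := .inl ⟨1, one_mem R₁, 1, ⟨one_mem R₂, by rw [mul_one, hΓ₂.2]⟩, hT.map_one.symm⟩

theorem stmt_18_general (hT : IsTensorMap T)
    (R₁ : StarSubalgebra ℂ (H₁ →L[ℂ] H₁)) (Γ₁ : H₁ →L[ℂ] H₁)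
    (h₁ : GradedBy (R₁ : Set (H₁ →L[ℂ] H₁)) Γ₁)
    (R₂ : StarSubalgebra ℂ (H₂ →L[ℂ] H₂)) (Γ₂ : H₂ →L[ℂ] H₂) (hΓ₂ : IsSAU Γ₂)
    (hIII : TypeIII (genVN {x | ∃ A ∈ R₁,
      ∃ B ∈ evenPart (R₂ : Set (H₂ →L[ℂ] H₂)) Γ₂, x = T A B})) :
    TypeIII (gradedTP T (R₁ : Set (H₁ →L[ℂ] H₁)) Γ₁ (R₂ : Set (H₂ →L[ℂ] H₂)) Γ₂) := by
  refine typeIII_genVN_of_even (P := gradedTensors hT h₁ R₂ hΓ₂) (hT.isSAU hΓ₂)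
    (fun _ => star_mem_evenTensors_union_oddTensors hT h₁ hΓ₂) rfl ?_ ?_ hIII
  · rintro _ ⟨A, -, B, ⟨-, hB⟩, rfl⟩
    rw [hT.conj, hB]
  · rintro _ ⟨A, -, B, ⟨-, hB⟩, rfl⟩
    rw [hT.conj, hB, hT.map_neg]

end TensorMap

/-- if `R₁ ⊗̄ (R₂)⁰` is of type III, then `R₁ ⊗̂ R₂` is of type III. -/
theorem stmt_18 {H₁ H₂ K : Type*}
    [NormedAddCommGroup H₁] [InnerProductSpace ℂ H₁] [CompleteSpace H₁]
    [NormedAddCommGroup H₂] [InnerProductSpace ℂ H₂] [CompleteSpace H₂]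
    [NormedAddCommGroup K] [InnerProductSpace ℂ K] [CompleteSpace K]
    (T : (H₁ →L[ℂ] H₁) → (H₂ →L[ℂ] H₂) → (K →L[ℂ] K)) (hT : IsTensorMap T)
    (R₁ : VonNeumannAlgebra H₁) (Γ₁ : H₁ →L[ℂ] H₁)
    (h₁ : GradedBy (R₁ : Set (H₁ →L[ℂ] H₁)) Γ₁)
    (R₂ : VonNeumannAlgebra H₂) (Γ₂ : H₂ →L[ℂ] H₂)
    (h₂ : GradedBy (R₂ : Set (H₂ →L[ℂ] H₂)) Γ₂)
    (hIII : TypeIII (genVN {x | ∃ A ∈ (R₁ : Set (H₁ →L[ℂ] H₁)),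
      ∃ B ∈ evenPart (R₂ : Set (H₂ →L[ℂ] H₂)) Γ₂, x = T A B})) :
    TypeIII (gradedTP T (R₁ : Set (H₁ →L[ℂ] H₁)) Γ₁
      (R₂ : Set (H₂ →L[ℂ] H₂)) Γ₂) := by
  exact stmt_18_general hT R₁.toStarSubalgebra Γ₁ h₁ R₂.toStarSubalgebra Γ₂ h₂.1 hIII
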